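/- arXiv:math/0511114 — 5 statements merged into one kernel-verified Lean document; each statement's English description precedes it below -/
import Mathlib

section
/- Let c_n denote the number of pairs (f,g) of permutations of {1,…,n} having no common descent, i.e., such that there is no i ∈ {1,…,n−1} with both f(i) > f(i+1) and g(i) > g(i+1). Then c_0 = 1 and, for every n ≥ 1, c_n = Σ_{i=0}^{n−1} (−1)^{n+i+1} · C(n,i)² · c_i, where C(n,i) is the binomial coefficient. -/
/-- The descent set of a permutation `f` of `{1,…,n}` (realized as `Equiv.Perm (Fin n)`
with 1-based positions: position `i` is the index `i-1` of `Fin n`):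
`Des f = {i : 1 ≤ i ≤ n-1 and f(i) > f(i+1)}`. -/
def Des {n : ℕ} (f : Equiv.Perm (Fin n)) : Finset ℕ :=
  (Finset.Ico 1 n).filter fun i =>
    ∃ h : i < n, f ⟨i, h⟩ < f ⟨i - 1, Nat.lt_of_le_of_lt (Nat.sub_le i 1) h⟩

/-- `c n` is the number of pairs `(f, g)` of permutations of `{1,…,n}` having no
common descent. -/
noncomputable def c (n : ℕ) : ℕ :=
  Nat.card {p : Equiv.Perm (Fin n) × Equiv.Perm (Fin n) // Des p.1 ∩ Des p.2 = ∅}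

/-!
Pass from pairs to families of permutations indexed by a finite type `ι`, and let `D ⊆ [1, n-1]` be
the set of common descents of such a family. For `0 ≤ i ≤ n`, count the families with
`[i+1, n-1] ⊆ D ⊆ [i, n-1]`. Each member decreases on its last `n - i` positions, so it is
determined by the set of its first `i` values and by their relative order; the relative orders form
a family of permutations of `{1,…,i}` without common descents. Hence there are `C(n,i)^|ι| c_i`
such families. On the other hand, a set `D` satisfies the condition for no `i` unless
`D = [m+1, n-1]` with `m < n`, and then exactly for `i = m` and `i = m + 1`, so the alternating sum
of these counts over `i` vanishes.
-/

open Finset Equiv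
open Set.powersetCard (card_eq)

section Descents

variable {m n : ℕ}

theorem Des_subset_Ico (f : Perm (Fin n)) : Des f ⊆ Ico 1 n :=
  filter_subset _ _

theorem succ_mem_Des {f : Perm (Fin n)} {j : ℕ} (hj : j + 1 < n) :
    j + 1 ∈ Des f ↔ f ⟨j + 1, hj⟩ < f ⟨j, by lia⟩ := by
  simp [Des, hj]

theorem add_mem_Des_iff_of_orderEmbedding {f : Perm (Fin n)} {g : Perm (Fin m)}
    (φ : Fin m ↪o Fin n) {a : ℕ} (ha : a + m ≤ n)
    (hfg : ∀ j : Fin m, f ⟨a + j, by lia⟩ = φ (g j)) {j : ℕ} (hj : j ∈ Ico 1 m) :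
    a + j ∈ Des f ↔ j ∈ Des g := by
  obtain ⟨hj1, hjm⟩ := mem_Ico.1 hj
  obtain ⟨j, rfl⟩ := Nat.exists_eq_add_of_le' hj1
  have hlast := hfg ⟨j + 1, hjm⟩
  have hprev := hfg ⟨j, by lia⟩
  simp only [← add_assoc] at hlast ⊢
  rw [succ_mem_Des (by lia), succ_mem_Des hjm, hlast, hprev, φ.lt_iff_lt]

theorem strictAnti_iff_Ico_subset_Des {f : Perm (Fin n)} : StrictAnti f ↔ Ico 1 n ⊆ Des f := by
  cases n with
  | zero => simp [Subsingleton.strictAnti]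
  | succ n =>
    rw [Fin.strictAnti_iff_succ_lt]
    constructor
    · intro h j hj
      obtain ⟨hj1, hjn⟩ := mem_Ico.1 hj
      obtain ⟨j, rfl⟩ := Nat.exists_eq_add_of_le' hj1
      exact (succ_mem_Des hjn).2 (h ⟨j, by lia⟩)
    · intro h j
      exact (succ_mem_Des (by lia)).1 (h (mem_Ico.2 ⟨by lia, by lia⟩))

theorem strictAnti_iff_eq_revPerm {f : Perm (Fin n)} : StrictAnti f ↔ f = Fin.revPerm := by
  refine ⟨fun h ↦ ?_, fun h ↦ h ▸ Fin.rev_strictAnti⟩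
  have hid : f ∘ Fin.rev = id := (h.comp Fin.rev_strictAnti).eq_id
  ext j
  simpa using congrArg Fin.val (congrFun hid j.rev)

theorem Ico_subset_Des_iff_eq_revPerm {f : Perm (Fin n)} : Ico 1 n ⊆ Des f ↔ f = Fin.revPerm :=
  strictAnti_iff_Ico_subset_Des.symm.trans strictAnti_iff_eq_revPerm

end Descents

section Shuffle

variable {i k : ℕ}

theorem card_compl_powersetCard (S : Set.powersetCard (Fin (i + k)) i) : #S.1ᶜ = k := by
  simp [card_compl]

/-- The permutation of `Fin (i + k)` whose first `i` values are the elements of `S` in the relative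
order `σ`, and whose last `k` values are the elements of `Sᶜ` in the relative order `τ`. -/
def shuffle (S : Set.powersetCard (Fin (i + k)) i) (σ : Perm (Fin i)) (τ : Perm (Fin k)) :
    Perm (Fin (i + k)) :=
  finSumFinEquiv.symm.trans
    ((sumCongr σ τ).trans (finSumEquivOfFinset (card_eq S) (card_compl_powersetCard S)))

variable (S : Set.powersetCard (Fin (i + k)) i) (σ : Perm (Fin i)) (τ : Perm (Fin k))

theorem shuffle_castAdd (j : Fin i) :
    shuffle S σ τ (Fin.castAdd k j) = S.1.orderEmbOfFin (card_eq S) (σ j) := by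
  simp [shuffle]

theorem shuffle_natAdd (j : Fin k) :
    shuffle S σ τ (Fin.natAdd i j) = S.1ᶜ.orderEmbOfFin (card_compl_powersetCard S) (τ j) := by
  simp [shuffle]

theorem range_shuffle_castAdd :
    Set.range (fun j : Fin i ↦ shuffle S σ τ (Fin.castAdd k j)) = S.1 := by
  simp only [shuffle_castAdd]
  rw [← range_orderEmbOfFin S.1 (card_eq S)]
  exact σ.surjective.range_comp _

variable {S σ τ} in
theorem shuffle_inj_left {S' : Set.powersetCard (Fin (i + k)) i} {σ' : Perm (Fin i)} :
    shuffle S σ τ = shuffle S' σ' τ ↔ S = S' ∧ σ = σ' := by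
  refine ⟨fun h ↦ ?_, fun ⟨hS, hσ⟩ ↦ hS ▸ hσ ▸ rfl⟩
  obtain rfl : S = S' := by
    apply Subtype.ext
    apply coe_injective
    rw [← range_shuffle_castAdd S σ τ, h, range_shuffle_castAdd]
  refine ⟨rfl, ?_⟩
  ext1 j
  apply (S.1.orderEmbOfFin (card_eq S)).injective
  rw [← shuffle_castAdd S σ τ, h, shuffle_castAdd]

theorem exists_shuffle_eq (f : Perm (Fin (i + k))) :
    ∃ (S : Set.powersetCard (Fin (i + k)) i) (σ : Perm (Fin i)) (τ : Perm (Fin k)),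
      shuffle S σ τ = f := by
  let S : Set.powersetCard (Fin (i + k)) i :=
    ⟨univ.map ((Fin.castAddEmb k).trans f.toEmbedding), by simp⟩
  let e := finSumEquivOfFinset (card_eq S) (card_compl_powersetCard S)
  let ρ : Perm (Fin i ⊕ Fin k) := finSumFinEquiv.trans (f.trans e.symm)
  have hρ : Set.MapsTo ρ (Set.range Sum.inl) (Set.range Sum.inl) := by
    rintro _ ⟨j, rfl⟩
    have hmem : f (Fin.castAdd k j) ∈ Set.range (S.1.orderEmbOfFin (card_eq S)) := by
      rw [range_orderEmbOfFin]
      simp [S]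
    obtain ⟨j', hj'⟩ := hmem
    exact ⟨j', (e.symm_apply_eq.2 hj'.symm).symm⟩
  obtain ⟨⟨σ, τ⟩, hστ⟩ := Perm.mem_sumCongrHom_range_of_perm_mapsTo_inl hρ
  refine ⟨S, σ, τ, ?_⟩
  rw [Perm.sumCongrHom_apply] at hστ
  ext1 x
  simp [shuffle, hστ, ρ, e]

theorem mem_Des_shuffle_iff {j : ℕ} (hj : j ∈ Ico 1 i) :
    j ∈ Des (shuffle S σ τ) ↔ j ∈ Des σ := by
  have hvalues (a : Fin i) :
      shuffle S σ τ ⟨0 + a, by lia⟩ = S.1.orderEmbOfFin (card_eq S) (σ a) := by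
    rw [← shuffle_castAdd S σ τ]
    congr 1
    ext
    simp
  simpa only [zero_add] using add_mem_Des_iff_of_orderEmbedding _ (by lia) hvalues hj

theorem add_mem_Des_shuffle_iff {j : ℕ} (hj : j ∈ Ico 1 k) :
    i + j ∈ Des (shuffle S σ τ) ↔ j ∈ Des τ :=
  add_mem_Des_iff_of_orderEmbedding _ le_rfl (shuffle_natAdd S σ τ) hj

theorem Ico_subset_Des_shuffle_iff :
    Ico (i + 1) (i + k) ⊆ Des (shuffle S σ τ) ↔ τ = Fin.revPerm := by
  have hshift : Ico (i + 1) (i + k) = (Ico 1 k).map (addLeftEmbedding i) := by simp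
  rw [← Ico_subset_Des_iff_eq_revPerm, hshift]
  simp only [subset_iff, mem_map, addLeftEmbedding_apply, forall_exists_index, and_imp,
    forall_apply_eq_imp_iff₂]
  exact forall₂_congr fun j hj ↦ add_mem_Des_shuffle_iff S σ τ hj

end Shuffle

section Families

variable {ι : Type*} [Fintype ι]

/-- The set of common descents of a family of permutations, with the indexing of positions used in
`Des`; for the empty family it is `[1, n-1]`. -/
def commonDes {n : ℕ} (f : ι → Perm (Fin n)) : Finset ℕ :=
  {j ∈ Ico 1 n | ∀ x, j ∈ Des (f x)}

theorem commonDes_subset_Ico {n : ℕ} (f : ι → Perm (Fin n)) : commonDes f ⊆ Ico 1 n :=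
  filter_subset _ _

theorem subset_commonDes_iff {n : ℕ} {f : ι → Perm (Fin n)} {s : Finset ℕ} (hs : s ⊆ Ico 1 n) :
    s ⊆ commonDes f ↔ ∀ x, s ⊆ Des (f x) := by
  grind [commonDes]

theorem commonDes_shuffle_subset_iff {i k : ℕ} (S : ι → Set.powersetCard (Fin (i + k)) i)
    (σ : ι → Perm (Fin i)) (τ : ι → Perm (Fin k)) :
    commonDes (fun x ↦ shuffle (S x) (σ x) (τ x)) ⊆ Ico i (i + k) ↔ commonDes σ = ∅ := by
  have hlow {j : ℕ} (hj : j ∈ Ico 1 i) :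
      j ∈ commonDes (fun x ↦ shuffle (S x) (σ x) (τ x)) ↔ j ∈ commonDes σ := by
    have hjk : j ∈ Ico 1 (i + k) := Ico_subset_Ico_right (Nat.le_add_right i k) hj
    simp only [commonDes, mem_filter, hj, hjk, mem_Des_shuffle_iff _ _ _ hj]
  have hσ := commonDes_subset_Ico σ
  have hshuffle := commonDes_subset_Ico (fun x ↦ shuffle (S x) (σ x) (τ x))
  grind

variable [DecidableEq ι]

variable (ι) in
/-- The number of families of permutations of `{1,…,n}`, indexed by `ι`, without common descents:
the analogue of `c n` for families in place of pairs. -/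
def noCommonDesCount (n : ℕ) : ℕ :=
  #{f : ι → Perm (Fin n) | commonDes f = ∅}

variable (ι) in
theorem noCommonDesCount_zero : noCommonDesCount ι 0 = 1 := by
  simp [noCommonDesCount, commonDes]

variable (ι) in
theorem card_filter_Ico_subset_commonDes {n i : ℕ} (hi : i ≤ n) :
    #{f : ι → Perm (Fin n) | Ico (i + 1) n ⊆ commonDes f ∧ commonDes f ⊆ Ico i n} =
      n.choose i ^ Fintype.card ι * noCommonDesCount ι i := by
  obtain ⟨k, rfl⟩ := Nat.exists_eq_add_of_le hi
  have hhigh : Ico (i + 1) (i + k) ⊆ Ico 1 (i + k) := Ico_subset_Ico_left (by lia)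
  have hchoose : Fintype.card (Set.powersetCard (Fin (i + k)) i) = (i + k).choose i := by
    rw [← Nat.card_eq_fintype_card, Set.powersetCard.card, Nat.card_fin]
  rw [noCommonDesCount, ← hchoose, ← Fintype.card_fun, ← card_univ, ← card_product]
  symm
  apply card_nbij fun p x ↦ shuffle (p.1 x) (p.2 x) Fin.revPerm
  · rintro ⟨S, σ⟩ hσ
    simp only [mem_coe, mem_product, mem_filter, mem_univ, true_and] at hσ ⊢
    rw [subset_commonDes_iff hhigh, commonDes_shuffle_subset_iff]
    exact ⟨fun x ↦ (Ico_subset_Des_shuffle_iff _ _ _).2 rfl, hσ⟩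
  · rintro ⟨S, σ⟩ - ⟨S', σ'⟩ - h
    simp only [funext_iff, shuffle_inj_left] at h
    exact Prod.ext (funext fun x ↦ (h x).1) (funext fun x ↦ (h x).2)
  · intro f hf
    choose S σ τ hf' using fun x ↦ exists_shuffle_eq (f x)
    obtain rfl : (fun x ↦ shuffle (S x) (σ x) (τ x)) = f := funext hf'
    simp only [mem_coe, mem_filter, mem_univ, true_and] at hf
    rw [subset_commonDes_iff hhigh, commonDes_shuffle_subset_iff] at hf
    obtain rfl : τ = fun _ ↦ Fin.revPerm :=
      funext fun x ↦ (Ico_subset_Des_shuffle_iff _ _ _).1 (hf.1 x)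
    exact ⟨(S, σ), by simpa using hf.2, rfl⟩

end Families

theorem exists_eq_Ico_succ {D : Finset ℕ} {i n : ℕ} (hn : 0 < n) (hD : 0 ∉ D) (hi : i ≤ n)
    (hl : Ico (i + 1) n ⊆ D) (hu : D ⊆ Ico i n) : ∃ m < n, D = Ico (m + 1) n := by
  by_cases hiD : i ∈ D
  · have hDi : D = Ico i n := hu.antisymm (by grind)
    exact ⟨i - 1, by lia, by grind⟩
  · have hDi : D = Ico (i + 1) n := hl.antisymm' (by grind)
    rcases hi.eq_or_lt with rfl | hin
    · exact ⟨i - 1, by lia, by grind⟩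
    · exact ⟨i, hin, hDi⟩

theorem Ico_succ_subset_and_subset_Ico_iff {i m n : ℕ} (hi : i ≤ n) (hm : m < n) :
    Ico (i + 1) n ⊆ Ico (m + 1) n ∧ Ico (m + 1) n ⊆ Ico i n ↔ i = m ∨ i = m + 1 := by
  refine ⟨fun ⟨hl, hu⟩ ↦ ?_, by grind⟩
  have hl' := @hl (i + 1)
  have hu' := @hu (m + 1)
  simp only [mem_Ico] at hl' hu'
  lia

theorem sum_neg_one_pow_filter_Ico_subset {D : Finset ℕ} {n : ℕ} (hn : 0 < n) (hD : 0 ∉ D) :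
    ∑ i ∈ range (n + 1) with Ico (i + 1) n ⊆ D ∧ D ⊆ Ico i n, (-1 : ℤ) ^ i = 0 := by
  by_cases h : ∃ m < n, D = Ico (m + 1) n
  · obtain ⟨m, hm, rfl⟩ := h
    have hfilter : {i ∈ range (n + 1) | Ico (i + 1) n ⊆ Ico (m + 1) n ∧
        Ico (m + 1) n ⊆ Ico i n} = {m, m + 1} := by
      grind [Ico_succ_subset_and_subset_Ico_iff]
    rw [hfilter, sum_pair (by simp)]
    ring
  · rw [filter_false_of_mem, sum_empty]
    rintro i hi ⟨hl, hu⟩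
    exact h (exists_eq_Ico_succ hn hD (mem_range_succ_iff.1 hi) hl hu)

theorem sum_neg_one_pow_mul_noCommonDesCount (ι : Type*) [Fintype ι] [DecidableEq ι] {n : ℕ}
    (hn : 0 < n) :
    ∑ i ∈ range (n + 1),
      (-1 : ℤ) ^ i * ((n.choose i : ℤ) ^ Fintype.card ι * noCommonDesCount ι i) = 0 := by
  have hzero_notMem (f : ι → Perm (Fin n)) : 0 ∉ commonDes f := fun h ↦ by
    simpa using commonDes_subset_Ico f h
  calc
    _ = ∑ i ∈ range (n + 1), ∑ f : ι → Perm (Fin n) with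
          Ico (i + 1) n ⊆ commonDes f ∧ commonDes f ⊆ Ico i n, (-1 : ℤ) ^ i := by
      refine sum_congr rfl fun i hi ↦ ?_
      rw [sum_const, card_filter_Ico_subset_commonDes ι (by grind), nsmul_eq_mul, mul_comm]
      push_cast
      rfl
    _ = ∑ f : ι → Perm (Fin n), ∑ i ∈ range (n + 1) with
          Ico (i + 1) n ⊆ commonDes f ∧ commonDes f ⊆ Ico i n, (-1 : ℤ) ^ i := by
      simp only [sum_filter]
      exact sum_comm
    _ = 0 := sum_eq_zero fun f _ ↦ sum_neg_one_pow_filter_Ico_subset hn (hzero_notMem f)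

theorem no_common_descent_recursion_general (ι : Type*) [Fintype ι] [DecidableEq ι] :
    noCommonDesCount ι 0 = 1 ∧ ∀ n : ℕ, 1 ≤ n →
      (noCommonDesCount ι n : ℤ) = ∑ i ∈ range n,
        (-1 : ℤ) ^ (n + i + 1) * (n.choose i : ℤ) ^ Fintype.card ι * noCommonDesCount ι i := by
  refine ⟨noCommonDesCount_zero ι, fun n hn ↦ ?_⟩
  have hsum := sum_neg_one_pow_mul_noCommonDesCount ι hn
  rw [sum_range_succ, Nat.choose_self, Nat.cast_one, one_pow, one_mul] at hsum
  have hsign : (-1 : ℤ) ^ n * (-1) ^ n = 1 := by simp [← mul_pow]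
  calc
    (noCommonDesCount ι n : ℤ) = -(-1) ^ n * ∑ i ∈ range n,
        (-1 : ℤ) ^ i * ((n.choose i : ℤ) ^ Fintype.card ι * noCommonDesCount ι i) := by
      linear_combination (-1 : ℤ) ^ n * hsum - (noCommonDesCount ι n : ℤ) * hsign
    _ = _ := by
      rw [mul_sum]
      exact sum_congr rfl fun i _ ↦ by ring

theorem c_eq_noCommonDesCount (n : ℕ) : c n = noCommonDesCount (Fin 2) n := by
  rw [c, noCommonDesCount, ← Fintype.card_subtype, ← Nat.card_eq_fintype_card]
  refine Nat.card_congr ((finTwoArrowEquiv _).symm.subtypeEquiv fun p ↦ ?_)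
  have hcommon : commonDes ((finTwoArrowEquiv _).symm p) = Des p.1 ∩ Des p.2 := by
    have h := Des_subset_Ico p.1
    ext j
    simp only [commonDes, finTwoArrowEquiv_symm_apply, mem_filter, Fin.forall_fin_two, mem_inter]
    exact and_iff_right_of_imp fun hj ↦ h hj.1
  rw [hcommon]

theorem no_common_descent_recursion :
    c 0 = 1 ∧ ∀ n : ℕ, 1 ≤ n →
      (c n : ℤ) = ∑ i ∈ Finset.range n,
        (-1 : ℤ) ^ (n + i + 1) * (n.choose i : ℤ) ^ 2 * (c i : ℤ) := by
  simpa only [c_eq_noCommonDesCount, Fintype.card_fin] using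
    no_common_descent_recursion_general (Fin 2)
end

section
/- Let n ≥ 1 and J ⊆ {1,…,n−1}, and let (q_1,…,q_ℓ) be the n-composition of J. Then the number of permutations f of {1,…,n} with Des(f) ⊇ J equals the multinomial coefficient n!/(q_1!·q_2!·⋯·q_ℓ!). -/
/-- The `n`-composition of a subset `I` of `{1,…,n-1}`: the list
`(p₁, p₂ - p₁, …, p_k - p_{k-1})` where `p₁ < p₂ < … < p_k` is the increasing
enumeration of `{1,…,n} \ I`. -/
def ncomp (n : ℕ) (I : Finset ℕ) : List ℕ :=
  let P := ((Finset.Icc 1 n) \ I).sort (· ≤ ·)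
  List.zipWith (· - ·) P (0 :: P)

/-!
Cut the positions `1, …, n` into consecutive blocks, a block ending at each `p ∉ J`; their sizes are
the entries of the `n`-composition of `J`. The descents of a permutation include `J` iff it is
decreasing on each block. Composing on the right with exactly one permutation that preserves the
blocks makes a given permutation decreasing on each block: the one that sorts the pairs
(block of `i`, value at `i`), with values in reversed order. So the permutations sought are
representatives of the left cosets of the group of block-preserving permutations, and that group
is the product of the symmetric groups of the blocks.
-/

open Equiv Finset Nat

theorem comp_perm_inv_eq_self {α β : Type*} {b : α → β} {σ : Perm α} (hσ : b ∘ σ = b) :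
    b ∘ ⇑σ⁻¹ = b := by
  rw [Perm.inv_def, comp_symm_eq, hσ]

section SortedComplement

variable {n : ℕ} {α β : Type*}

theorem existsUnique_perm_strictMono_comp [LinearOrder α] {x : Fin n → α}
    (hx : Function.Injective x) : ∃! σ : Perm (Fin n), StrictMono (x ∘ σ) := by
  refine ⟨Tuple.sort x, (Tuple.monotone_sort x).strictMono_of_injective
    (hx.comp (Tuple.sort x).injective), fun σ hσ => Equiv.ext fun i => hx ?_⟩
  exact congrFun (Tuple.unique_monotone hσ.monotone (Tuple.monotone_sort x)) i

theorem comp_perm_eq_self_of_monotone [PartialOrder β] {b : Fin n → β} (hb : Monotone b)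
    {σ : Perm (Fin n)} (hσ : Monotone (b ∘ σ)) : b ∘ σ = b :=
  Tuple.unique_monotone (τ := 1) hσ hb

/-- The pair (block of `i`, value of `f` at `i`), compared lexicographically. The values are in the
dual order, so that for monotone `b` this is strictly increasing in `i` iff `f` is decreasing on
each level set of `b`. -/
def lexKey (b : Fin n → β) (f : Perm (Fin n)) (i : Fin n) : β ×ₗ (Fin n)ᵒᵈ :=
  toLex (b i, OrderDual.toDual (f i))

theorem lexKey_injective (b : Fin n → β) (f : Perm (Fin n)) : Function.Injective (lexKey b f) :=
  fun _ _ h => f.injective (congrArg (fun x => OrderDual.ofDual (ofLex x).2) h)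

theorem lexKey_comp_perm {b : Fin n → β} {σ : Perm (Fin n)} (hσ : b ∘ σ = b)
    (f : Perm (Fin n)) : lexKey b f ∘ σ = lexKey b (f * σ) :=
  funext fun i => congrArg (fun c => toLex (c, OrderDual.toDual (f (σ i)))) (congrFun hσ i)

theorem monotone_comp_of_monotone_lexKey_comp [Preorder β] {b : Fin n → β} {f σ : Perm (Fin n)}
    (h : Monotone (lexKey b f ∘ σ)) : Monotone (b ∘ σ) :=
  fun _ _ hij => Prod.Lex.monotone_fst _ _ (h hij)

theorem isComplement_strictMono_lexKey [LinearOrder β] {b : Fin n → β} (hb : Monotone b) :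
    Subgroup.IsComplement {f : Perm (Fin n) | StrictMono (lexKey b f)}
      {σ : Perm (Fin n) | b ∘ σ = b} := by
  refine Subgroup.isComplement_iff_existsUnique_mul_inv_mem.2 fun g => ?_
  obtain ⟨σ, hσ, huniq⟩ := existsUnique_perm_strictMono_comp (lexKey_injective b g)
  have hbσ : b ∘ σ = b :=
    comp_perm_eq_self_of_monotone hb (monotone_comp_of_monotone_lexKey_comp hσ.monotone)
  refine ⟨⟨σ⁻¹, comp_perm_inv_eq_self hbσ⟩, ?_, ?_⟩
  · change StrictMono (lexKey b (g * σ⁻¹⁻¹))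
    rwa [inv_inv, ← lexKey_comp_perm hbσ]
  · rintro ⟨τ, hτ⟩ (h : StrictMono (lexKey b (g * τ⁻¹)))
    rw [← lexKey_comp_perm (comp_perm_inv_eq_self hτ)] at h
    exact Subtype.ext (inv_eq_iff_eq_inv.1 (huniq τ⁻¹ h))

end SortedComplement

theorem card_perm_comp_eq_self {α β : Type*} [Finite α] {b : α → β} {s : Finset β}
    (hb : ∀ a, b a ∈ s) :
    Nat.card {σ : Perm α // b ∘ σ = b} = ∏ k ∈ s, (Nat.card {a // b a = k})! := by
  classical
  have := Fintype.ofFinite α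
  simp only [Nat.card_eq_fintype_card]
  rw [DomMulAct.stabilizer_card']
  refine prod_subset (by simpa [subset_iff] using hb) fun k _ hk => ?_
  have : IsEmpty {a // b a = k} := ⟨fun a => hk (mem_image.2 ⟨a, mem_univ _, a.2⟩)⟩
  simp

theorem filter_range_eq_map_nth (p : ℕ → Prop) [DecidablePred p] (m : ℕ) :
    (List.range m).filter p = (List.range (count p m)).map (nth p) := by
  induction m with
  | zero => simp
  | succ m ih =>
    by_cases h : p m
    · simp [List.range_succ, ih, count_succ, h, nth_count]
    · simp [List.range_succ, ih, count_succ, h]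

theorem sort_filter_range (p : ℕ → Prop) [DecidablePred p] (m : ℕ) :
    ((range m).filter p).sort (· ≤ ·) = (List.range (count p m)).map (nth p) := by
  have hsorted : ((List.range m).filter p).Pairwise (· ≤ ·) := List.pairwise_le_range.filter _
  have hset : ((List.range m).filter p).toFinset = (range m).filter p := by ext; simp
  rw [← filter_range_eq_map_nth, ← hset,
    (List.toFinset_sort _ (List.nodup_range.filter _)).2 hsorted]

theorem count_succ_eq_succ_iff_mem_Ico {p : ℕ → Prop} [DecidablePred p]
    (hp : (Set.ofPred p).Infinite) {a k : ℕ} :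
    count p (a + 1) = k + 1 ↔ a ∈ Ico (nth p k) (nth p (k + 1)) := by
  have hk := lt_nth_iff_count_lt hp (a := k) (b := a + 1)
  have hk' := lt_nth_iff_count_lt hp (a := k + 1) (b := a + 1)
  rw [mem_Ico]
  omega

/-- The number, starting from `0`, of the block containing the `0`-based position `a`: a new block
starts at each `0`-based position `q ≥ 1` with `q ∉ J`, since `q` is then not required to be a
descent between the `1`-based positions `q` and `q + 1`. -/
def blockIndex (J : Finset ℕ) (a : ℕ) : ℕ :=
  count (· + 1 ∉ J) a

section Blocks

variable {n : ℕ} {J : Finset ℕ}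

theorem blockIndex_mono (J : Finset ℕ) : Monotone (blockIndex J) :=
  count_monotone _

theorem blockIndex_succ (J : Finset ℕ) (a : ℕ) :
    blockIndex J (a + 1) = blockIndex J a + if a + 1 ∉ J then 1 else 0 :=
  count_succ _ a

theorem blockIndex_add_one (h0 : 0 ∉ J) (a : ℕ) :
    blockIndex J a + 1 = count (· ∉ J) (a + 1) := by
  simp [blockIndex, count_succ', h0]

theorem blockIndex_lt_count (h0 : 0 ∉ J) {a : ℕ} (ha : a < n) :
    blockIndex J a < count (· ∉ J) n := by
  rw [← Nat.add_one_le_iff, blockIndex_add_one h0]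
  exact count_monotone _ ha

theorem infinite_notMem (J : Finset ℕ) : (Set.ofPred (· ∉ J)).Infinite :=
  J.finite_toSet.infinite_compl

theorem blockIndex_eq_iff_mem_Ico (h0 : 0 ∉ J) {a k : ℕ} :
    blockIndex J a = k ↔ a ∈ Ico (nth (· ∉ J) k) (nth (· ∉ J) (k + 1)) := by
  rw [← count_succ_eq_succ_iff_mem_Ico (infinite_notMem J), ← blockIndex_add_one h0,
    Nat.add_right_cancel_iff]

theorem nth_notMem_le (hn : n ∉ J) {k : ℕ} (hk : k ≤ count (· ∉ J) n) :
    nth (· ∉ J) k ≤ n :=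
  (nth_monotone (infinite_notMem J) hk).trans_eq (nth_count hn)

theorem card_blockIndex_eq (h0 : 0 ∉ J) (hn : n ∉ J) {k : ℕ} (hk : k < count (· ∉ J) n) :
    Nat.card {i : Fin n // blockIndex J i = k} = nth (· ∉ J) (k + 1) - nth (· ∉ J) k := by
  have hle : nth (· ∉ J) (k + 1) ≤ n := nth_notMem_le hn hk
  have hlt : ∀ a ∈ Ico (nth (· ∉ J) k) (nth (· ∉ J) (k + 1)), a < n := fun a ha =>
    (mem_Ico.1 ha).2.trans_le hle
  simp only [blockIndex_eq_iff_mem_Ico h0]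
  rw [Nat.subtype_card (attachFin _ hlt) fun _ => mem_attachFin hlt, card_attachFin, Nat.card_Ico]

theorem zero_cons_sort_Icc_sdiff (h0 : 0 ∉ J) (n : ℕ) :
    0 :: (Icc 1 n \ J).sort (· ≤ ·) = (List.range (count (· ∉ J) (n + 1))).map (nth (· ∉ J)) := by
  have hinsert : (range (n + 1)).filter (· ∉ J) = insert 0 (Icc 1 n \ J) := by
    ext q
    simp only [mem_filter, mem_range, mem_insert, mem_sdiff, mem_Icc]
    grind
  rw [← sort_filter_range, hinsert, sort_insert _ (by simp) (by simp)]

theorem ncomp_eq_map_range (h0 : 0 ∉ J) (hn : n ∉ J) :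
    ncomp n J = (List.range (count (· ∉ J) n)).map
      fun k => nth (· ∉ J) (k + 1) - nth (· ∉ J) k := by
  have hcons := zero_cons_sort_Icc_sdiff h0 n
  have htail : (Icc 1 n \ J).sort (· ≤ ·) =
      (List.range (count (· ∉ J) n)).map fun k => nth (· ∉ J) (k + 1) := by
    rw [count_succ, if_pos hn, List.range_succ_eq_map, List.map_cons, List.map_map] at hcons
    exact List.tail_eq_of_cons_eq hcons
  refine List.ext_getElem (by simp [ncomp, htail]) fun k _ _ => ?_
  simp only [ncomp, hcons, List.getElem_zipWith]
  simp [htail]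

theorem card_perm_blockIndex_comp_eq_self (h0 : 0 ∉ J) (hn : n ∉ J) :
    Nat.card {σ : Perm (Fin n) //
      (fun i : Fin n => blockIndex J i) ∘ σ = fun i : Fin n => blockIndex J i} =
      ((ncomp n J).map Nat.factorial).prod := by
  rw [card_perm_comp_eq_self fun i => mem_range.2 (blockIndex_lt_count h0 i.2),
    ncomp_eq_map_range h0 hn, List.map_map]
  exact prod_congr rfl fun k hk => congrArg _ (card_blockIndex_eq h0 hn (mem_range.1 hk))

end Blocks

theorem add_one_mem_des_iff {m : ℕ} {f : Perm (Fin (m + 1))} {i : Fin m} :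
    (i : ℕ) + 1 ∈ Des f ↔ f i.succ < f i.castSucc := by
  simp [Des, Fin.succ, Fin.castSucc, Fin.castAdd, Fin.castLE]

theorem lexKey_blockIndex_castSucc_lt_succ_iff {m : ℕ} {J : Finset ℕ} {f : Perm (Fin (m + 1))}
    {i : Fin m} :
    lexKey (fun j => blockIndex J j) f i.castSucc < lexKey (fun j => blockIndex J j) f i.succ ↔
      ((i : ℕ) + 1 ∈ J → (i : ℕ) + 1 ∈ Des f) := by
  by_cases hi : (i : ℕ) + 1 ∈ J <;>
    simp [lexKey, Prod.Lex.toLex_lt_toLex, blockIndex_succ, add_one_mem_des_iff, hi]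

theorem subset_des_iff_strictMono_lexKey {n : ℕ} {J : Finset ℕ} (hJ : J ⊆ Icc 1 (n - 1))
    (f : Perm (Fin n)) :
    J ⊆ Des f ↔ StrictMono (lexKey (fun i => blockIndex J i) f) := by
  obtain _ | m := n
  · exact iff_of_true (fun j hj => absurd (hJ hj) (by simp)) fun i => i.elim0
  simp only [Fin.strictMono_iff_lt_succ, lexKey_blockIndex_castSucc_lt_succ_iff]
  refine ⟨fun h i hi => h hi, fun h j hj => ?_⟩
  obtain ⟨h₁, h₂⟩ := mem_Icc.1 (hJ hj)
  obtain ⟨i, rfl⟩ := Nat.exists_eq_add_of_le' h₁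
  exact h ⟨i, by omega⟩ hj

theorem card_subset_des_mul_prod_factorial_ncomp {n : ℕ} {J : Finset ℕ}
    (hJ : J ⊆ Icc 1 (n - 1)) :
    Nat.card {f : Perm (Fin n) // J ⊆ Des f} * ((ncomp n J).map Nat.factorial).prod = n ! := by
  have h0 : 0 ∉ J := fun h => by simpa using hJ h
  have hn : n ∉ J := fun h => by have := mem_Icc.1 (hJ h); omega
  have hmono : Monotone fun i : Fin n => blockIndex J i := fun _ _ h => blockIndex_mono J h
  rw [← card_perm_blockIndex_comp_eq_self h0 hn,
    Nat.card_congr (subtypeEquivRight (subset_des_iff_strictMono_lexKey hJ))]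
  exact (isComplement_strictMono_lexKey hmono).card_mul_card.trans
    (by rw [Nat.card_perm, Nat.card_fin])

/-- The number of permutations of `{1,…,n}` whose descent set contains `J` is the
multinomial coefficient `n! / (q₁! ⋯ q_ℓ!)`, where `(q₁,…,q_ℓ)` is the
`n`-composition of `J`. -/
theorem card_descents_superset (n : ℕ) (hn : 1 ≤ n) (J : Finset ℕ)
    (hJ : J ⊆ Finset.Icc 1 (n - 1)) :
    Nat.card {f : Equiv.Perm (Fin n) // J ⊆ Des f} =
      n.factorial / ((ncomp n J).map Nat.factorial).prod := by
  have hpos : 0 < ((ncomp n J).map Nat.factorial).prod :=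
    List.prod_pos (by simp [Nat.factorial_pos])
  exact Nat.eq_div_of_mul_eq_left hpos.ne' (card_subset_des_mul_prod_factorial_ncomp hJ)
end

section
/- Let n ≥ 1 and let I, J ⊆ {1,…,n−1} have n-compositions (p_1,…,p_k) and (q_1,…,q_ℓ) respectively. Then the number of permutations f of {1,…,n} satisfying Des(f⁻¹) ⊇ I and Des(f) ⊇ J equals the number of k×ℓ matrices with non-negative integer entries whose i-th row sums to p_i for every i and whose j-th column sums to q_j for every j. -/
/-! The sets `I` and `J` cut `{1,…,n}` into consecutive blocks, whose sizes are the parts of their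
`n`-compositions; let `r` and `c` be the maps sending a number to the index of its block. Then
`I ⊆ Des f⁻¹` says that `f⁻¹` is strictly decreasing on the fibres of `r`, and `J ⊆ Des f` that `f`
is strictly decreasing on the fibres of `c`. The bijection takes `f` to the matrix
`A i j = #{x | r (f x) = i ∧ c x = j}`, in two steps.

* The word `w = r ∘ f` has prescribed letter counts, and each such word comes from exactly one `f`
  with `f⁻¹` strictly decreasing on the fibres of `r`: on each of them, `f⁻¹` is the order-reversing
  bijection onto a fibre of `w`. For this `f`, being strictly decreasing on a set amounts to `w`
  being weakly decreasing there.
* A word that is weakly decreasing on a fibre of `c` is determined there by its letter counts, which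
  are a column of `A`, and every column of non-negative integers with the right sum occurs. -/

open Finset

section Combinatorics

variable {α β ι κ : Type*}

theorem strictAntiOn_iff_antitoneOn_comp [PartialOrder α] [LinearOrder β] [PartialOrder κ]
    {r : β → κ} (hr : Monotone r) {f : α ≃ β} (hf : ∀ i, StrictAntiOn f.symm (r ⁻¹' {i}))
    {s : Set α} : StrictAntiOn f s ↔ AntitoneOn (r ∘ f) s := by
  refine ⟨fun h => hr.comp_antitoneOn h.antitoneOn, fun h x hx y hy hxy => ?_⟩
  by_contra! hle
  have hrxy : r (f y) = r (f x) := (h hx hy hxy.le).antisymm (hr hle)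
  have hyx := (hf (r (f x))).antitoneOn rfl hrxy hle
  simp only [Equiv.symm_apply_apply] at hyx
  exact hyx.not_gt hxy

theorem forall_strictAntiOn_fiber_iff_forall_covBy [PartialOrder α] [SuccOrder α]
    [IsSuccArchimedean α] [Preorder β] [PartialOrder ι] {c : α → ι} (hc : Monotone c) {f : α → β} :
    (∀ j, StrictAntiOn f (c ⁻¹' {j})) ↔ ∀ x y, x ⋖ y → c x = c y → f y < f x := by
  refine ⟨fun h x y hxy hcxy => h (c y) hcxy rfl hxy.lt, fun h j => ?_⟩
  exact strictAntiOn_of_succ_lt (Set.ordConnected_singleton.preimage_mono hc) fun x hx hxj hyj =>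
    h x _ (Order.covBy_succ_of_not_isMax hx) (hxj.trans hyj.symm)

variable [Fintype α]

theorem eq_of_monotone_of_card_fiber_eq [LinearOrder α] [PartialOrder κ] [DecidableEq κ]
    {u v : α → κ} (hu : Monotone u) (hv : Monotone v)
    (h : ∀ i, #{x | u x = i} = #{x | v x = i}) : u = v := by
  let σ : α ≃ α := Equiv.ofFiberEquiv (f := v) (g := u) fun i =>
    Fintype.equivOfCardEq (by simp only [Fintype.card_subtype, h])
  have hσ : u ∘ σ = v := funext <| Equiv.ofFiberEquiv_map _
  let e := monoEquivOfFin α rfl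
  have huv : (u ∘ e) ∘ Equiv.refl _ = (u ∘ e) ∘ e.symm.toEquiv.permCongr σ :=
    Tuple.unique_monotone (hu.comp e.monotone) <| by
      convert hv.comp e.monotone using 1
      funext x
      simp [← hσ]
  funext x
  simpa [← hσ] using congrFun huv (e.symm x)

theorem existsUnique_monotone_card_fiber [LinearOrder α] [LinearOrder κ] [Fintype κ] {m : κ → ℕ}
    (hm : ∑ i, m i = Fintype.card α) :
    ∃! u : α → κ, Monotone u ∧ ∀ i, #{x | u x = i} = m i := by
  have : Fintype (Σₗ i, Fin (m i)) := inferInstanceAs (Fintype (Σ i, Fin (m i)))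
  let e : α ≃o Σₗ i, Fin (m i) := (monoEquivOfFin α rfl).symm.trans <|
    monoEquivOfFin _ <| (Fintype.card_congr ofLex).trans <| by simp [hm]
  refine existsUnique_of_exists_of_unique ⟨fun x => (ofLex (e x)).1, fun x y hxy => ?_, fun i => ?_⟩
    fun u v hu hv => eq_of_monotone_of_card_fiber_eq hu.1 hv.1 fun i => (hu.2 i).trans (hv.2 i).symm
  · rcases Sigma.Lex.le_def.1 (e.monotone hxy) with h | ⟨h, -⟩
    exacts [h.le, h.le]
  · let fiberEquiv : {x // (ofLex (e x)).1 = i} ≃ Fin (m i) :=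
      ((e.toEquiv.trans ofLex).subtypeEquiv fun _ => Iff.rfl).trans (Equiv.sigmaSubtype i)
    rw [← Fintype.card_subtype, Fintype.card_congr fiberEquiv, Fintype.card_fin]

theorem existsUnique_antitone_card_fiber [LinearOrder α] [LinearOrder κ] [Fintype κ] {m : κ → ℕ}
    (hm : ∑ i, m i = Fintype.card α) :
    ∃! u : α → κ, Antitone u ∧ ∀ i, #{x | u x = i} = m i :=
  existsUnique_monotone_card_fiber (κ := κᵒᵈ) hm

theorem card_filter_subtype (p q : α → Prop) [DecidablePred p] [DecidablePred q] :
    #{x : {x // p x} | q x} = #{x | q x ∧ p x} := by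
  simp only [and_comm (a := q _)]
  rw [← Fintype.card_subtype, ← Fintype.card_subtype,
    Fintype.card_congr (Equiv.subtypeSubtypeEquivSubtypeInter p q)]

theorem existsUnique_antitoneOn_fibers_card [LinearOrder α] [DecidableEq ι] [LinearOrder κ]
    [Fintype κ] (c : α → ι) {A : κ → ι → ℕ} (hA : ∀ j, ∑ i, A i j = #{x | c x = j}) :
    ∃! w : α → κ, (∀ j, AntitoneOn w (c ⁻¹' {j})) ∧ ∀ i j, #{x | w x = i ∧ c x = j} = A i j := by
  choose v hv hv_unique using fun j => existsUnique_antitone_card_fiber (α := {x // c x = j})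
    ((hA j).trans (Fintype.card_subtype _).symm)
  let w x := v (c x) ⟨x, rfl⟩
  have w_restrict j : (fun x : {x // c x = j} => w x) = v j := by
    funext ⟨x, hx⟩
    subst hx
    rfl
  refine ⟨w, ⟨fun j => Set.antitoneOn_iff_antitone.2 ?_, fun i j => ?_⟩,
    fun w' ⟨hw', hcard⟩ => funext fun x => ?_⟩
  · exact (w_restrict j).symm ▸ (hv j).1
  · rw [← (hv j).2 i, ← w_restrict j, card_filter_subtype _ (w · = i)]
  · refine congrFun (hv_unique (c x) (fun y => w' y) ⟨?_, fun i => ?_⟩) ⟨x, rfl⟩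
    · exact Set.antitoneOn_iff_antitone.1 (hw' _)
    · rw [← hcard, card_filter_subtype _ (w' · = i)]

theorem existsUnique_equiv_strictAntiOn_fibers [LinearOrder α] [LinearOrder β] [Fintype β]
    [DecidableEq κ] {w : α → κ} {r : β → κ} (h : ∀ i, #{x | w x = i} = #{y | r y = i}) :
    ∃! g : β ≃ α, w ∘ g = r ∧ ∀ i, StrictAntiOn g (r ⁻¹' {i}) := by
  let e i : {y // r y = i} ≃o {x // w x = i}ᵒᵈ := (monoEquivOfFin _ rfl).symm.trans <|
    monoEquivOfFin _ <| (Fintype.card_congr OrderDual.ofDual).trans <| by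
      simp only [Fintype.card_subtype, h]
  let g : β ≃ α := Equiv.ofFiberEquiv fun i => (e i).toEquiv.trans OrderDual.ofDual
  have g_restrict i : (fun y : {y // r y = i} => g y) = fun y => ↑(OrderDual.ofDual (e i y)) := by
    funext ⟨y, hy⟩
    subst hy
    rfl
  have hg i : StrictAntiOn g (r ⁻¹' {i}) := Set.strictAntiOn_iff_strictAnti.2 <|
    (g_restrict i).symm ▸ fun _ _ hyz => (e i).strictMono hyz
  have range_restrict {k : β ≃ α} (hk : w ∘ k = r) i :
      Set.range (fun y : r ⁻¹' {i} => k y) = w ⁻¹' {i} := by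
    rw [← Set.image_eq_range, ← hk, Set.preimage_comp, k.image_preimage]
  have hwg : w ∘ g = r := funext <| Equiv.ofFiberEquiv_map _
  refine ⟨g, ⟨hwg, hg⟩, fun g' ⟨hwg', hg'⟩ => Equiv.ext fun y => ?_⟩
  have restrict_eq := (StrictAnti.range_inj (Set.strictAntiOn_iff_strictAnti.1 (hg' (r y)))
    (Set.strictAntiOn_iff_strictAnti.1 (hg (r y)))).1 <|
      (range_restrict hwg' _).trans (range_restrict hwg _).symm
  exact congrFun restrict_eq ⟨y, rfl⟩

theorem sum_card_filter_and_eq [Fintype ι] [DecidableEq ι] (p : α → Prop) [DecidablePred p]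
    (c : α → ι) : ∑ j, #{x | p x ∧ c x = j} = #{x | p x} := by
  simp only [← filter_filter]
  exact (card_eq_sum_card_fiberwise fun _ _ => mem_coe.2 (mem_univ _)).symm

variable [LinearOrder α]

theorem card_words_eq_card_matrices [LinearOrder κ] [Fintype κ] [Fintype ι] [DecidableEq ι]
    (c : α → ι) (p : κ → ℕ) :
    Nat.card {w : α → κ //
        (∀ i, #{x | w x = i} = p i) ∧ ∀ j, AntitoneOn w (c ⁻¹' {j})} =
      Nat.card {A : κ → ι → ℕ //
        (∀ i, ∑ j, A i j = p i) ∧ ∀ j, ∑ i, A i j = #{x | c x = j}} := by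
  have row_sum (w : α → κ) i : ∑ j, #{x | w x = i ∧ c x = j} = #{x | w x = i} :=
    sum_card_filter_and_eq (w · = i) c
  have col_sum (w : α → κ) j : ∑ i, #{x | w x = i ∧ c x = j} = #{x | c x = j} := by
    simp only [and_comm (b := c _ = j), sum_card_filter_and_eq]
  refine Nat.card_eq_of_bijective (fun w => ⟨fun i j => #{x | w.1 x = i ∧ c x = j},
    fun i => (row_sum w.1 i).trans (w.2.1 i), col_sum w.1⟩)
    ⟨fun w w' h => ?_, fun ⟨A, hp, hc⟩ => ?_⟩
  · have h' i j := congrFun₂ (congrArg Subtype.val h) i j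
    exact Subtype.ext <| (existsUnique_antitoneOn_fibers_card c (col_sum w.1)).unique
      ⟨w.2.2, fun _ _ => rfl⟩ ⟨w'.2.2, fun i j => (h' i j).symm⟩
  · obtain ⟨w, hw, hA⟩ := (existsUnique_antitoneOn_fibers_card c hc).exists
    exact ⟨⟨w, fun i => by simp only [← row_sum, hA, hp], hw⟩, Subtype.ext <| funext₂ hA⟩

theorem card_equivs_eq_card_words [LinearOrder β] [Fintype β] [PartialOrder κ] [DecidableEq κ]
    {r : β → κ} (hr : Monotone r) (c : α → ι) :
    Nat.card {f : α ≃ β //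
        (∀ i, StrictAntiOn f.symm (r ⁻¹' {i})) ∧ ∀ j, StrictAntiOn f (c ⁻¹' {j})} =
      Nat.card {w : α → κ //
        (∀ i, #{x | w x = i} = #{y | r y = i}) ∧ ∀ j, AntitoneOn w (c ⁻¹' {j})} := by
  have card_word (f : α ≃ β) i : #{x | (r ∘ f) x = i} = #{y | r y = i} :=
    card_bijective f f.bijective fun x => by simp
  refine Nat.card_eq_of_bijective (fun f => ⟨r ∘ f.1, card_word f.1,
    fun j => (strictAntiOn_iff_antitoneOn_comp hr f.2.1).1 (f.2.2 j)⟩)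
    ⟨fun f f' h => ?_, fun ⟨w, hcard, hw⟩ => ?_⟩
  · have h' : r ∘ f'.1 = r ∘ f.1 := (congrArg Subtype.val h).symm
    have word_symm (k : α ≃ β) : (r ∘ k) ∘ k.symm = r := by simp [Function.comp_assoc]
    refine Subtype.ext <| Equiv.symm_bijective.injective <|
      (existsUnique_equiv_strictAntiOn_fibers (card_word f.1)).unique
      ⟨word_symm f.1, f.2.1⟩ ⟨h' ▸ word_symm f'.1, f'.2.1⟩
  · obtain ⟨g, rfl, hg⟩ := (existsUnique_equiv_strictAntiOn_fibers hcard).exists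
    have hword : (w ∘ g) ∘ g.symm = w := by simp [Function.comp_assoc]
    have hg_symm j : StrictAntiOn g.symm (c ⁻¹' {j}) :=
      (strictAntiOn_iff_antitoneOn_comp (f := g.symm) hr hg).2 (hword.symm ▸ hw j)
    exact ⟨⟨g.symm, hg, hg_symm⟩, Subtype.ext hword⟩

end Combinatorics

section Composition

theorem add_sum_take_zipWith_sub {a : ℕ} {l : List ℕ} (hl : (a :: l).SortedLE) {i : ℕ}
    (hi : i ≤ l.length) :
    a + ((List.zipWith (· - ·) l (a :: l)).take i).sum = (a :: l)[i]'(Nat.lt_succ_of_le hi) := by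
  induction i with
  | zero => simp
  | succ i ih =>
    have hle : (a :: l)[i]'(Nat.lt_succ_of_lt hi) ≤ l[i] :=
      hl.getElem_le_getElem_of_le (j := i + 1) (hj := Nat.succ_lt_succ hi) i.le_succ
    rw [List.sum_take_succ _ _ (by simpa using hi), ← add_assoc, ih (Nat.le_of_succ_le hi),
      List.getElem_zipWith, add_tsub_cancel_of_le hle, List.getElem_cons_succ]

theorem pos_of_mem_zipWith_sub {a : ℕ} {l : List ℕ} (hl : (a :: l).SortedLT) {d : ℕ}
    (hd : d ∈ List.zipWith (· - ·) l (a :: l)) : 0 < d := by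
  obtain ⟨i, hi, rfl⟩ := List.mem_iff_getElem.1 hd
  have hil : i < l.length := by simpa using hi
  rw [List.getElem_zipWith, tsub_pos_iff_lt]
  exact hl.getElem_lt_getElem_of_lt (j := i + 1) (hj := Nat.succ_lt_succ hil) i.lt_succ_self

theorem zero_cons_sort_Icc_sdiff_s4 (n : ℕ) {I : Finset ℕ} (hI : 0 ∉ I) :
    0 :: (Icc 1 n \ I).sort = (range (n + 1) \ I).sort := by
  rw [← sort_insert _ (by simp) (by simp)]
  congr 1
  ext m
  rcases m.eq_zero_or_pos with rfl | hm
  · simpa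
  · simp [hm.ne']
    omega

theorem sum_take_ncomp (n : ℕ) {I : Finset ℕ} (hI : 0 ∉ I) {i : ℕ} (hi : i ≤ (ncomp n I).length) :
    ((ncomp n I).take i).sum = (range (n + 1) \ I).sort[i]'(by
      simpa [ncomp, ← zero_cons_sort_Icc_sdiff_s4 n hI, Nat.lt_succ_iff] using hi) := by
  have hsorted : (0 :: (Icc 1 n \ I).sort).SortedLE := by
    rw [zero_cons_sort_Icc_sdiff_s4 n hI]
    exact (sortedLT_sort _).sortedLE
  have hsum := add_sum_take_zipWith_sub hsorted (i := i) (by simpa [ncomp] using hi)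
  simpa only [ncomp, zero_add, zero_cons_sort_Icc_sdiff_s4 n hI] using hsum

theorem exists_sum_take_ncomp_eq_iff {n : ℕ} {I : Finset ℕ} (hI : 0 ∉ I) {m : ℕ} :
    (∃ i ≤ (ncomp n I).length, ((ncomp n I).take i).sum = m) ↔ m ≤ n ∧ m ∉ I := by
  have hlength : (range (n + 1) \ I).sort.length = (ncomp n I).length + 1 := by
    simp [ncomp, ← zero_cons_sort_Icc_sdiff_s4 n hI]
  rw [← Order.lt_add_one_iff, ← mem_range, ← mem_sdiff, ← mem_sort (· ≤ ·), List.mem_iff_getElem]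
  simp only [hlength, Nat.lt_succ_iff]
  exact ⟨fun ⟨i, hi, h⟩ => ⟨i, hi, (sum_take_ncomp n hI hi).symm.trans h⟩,
    fun ⟨i, hi, h⟩ => ⟨i, hi, (sum_take_ncomp n hI hi).trans h⟩⟩

theorem sum_ncomp {n : ℕ} {I : Finset ℕ} (h0 : 0 ∉ I) (hn : n ∉ I) : (ncomp n I).sum = n := by
  obtain ⟨i, -, hi⟩ := (exists_sum_take_ncomp_eq_iff h0).2 ⟨le_rfl, hn⟩
  refine le_antisymm ?_ (hi.ge.trans ((List.take_sublist i _).sum_le_sum fun _ _ => Nat.zero_le _))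
  exact ((exists_sum_take_ncomp_eq_iff h0).1 ⟨_, le_rfl, by rw [List.take_length]⟩).1

/-- The `n`-composition `ncomp n I` of a subset `I` of `{1,…,n-1}` as a `Composition n`, so that
`Composition.index` assigns to each position the block containing it. -/
def nComposition (n : ℕ) {I : Finset ℕ} (hI : I ⊆ Icc 1 (n - 1)) : Composition n where
  blocks := ncomp n I
  blocks_pos := pos_of_mem_zipWith_sub <| by
    rw [zero_cons_sort_Icc_sdiff_s4 n fun h => by simpa using hI h]
    exact sortedLT_sort _
  blocks_sum := sum_ncomp (fun h => by simpa using hI h) fun h => by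
    have := mem_Icc.1 (hI h)
    omega

variable {n : ℕ} (c : Composition n)

theorem composition_index_le_iff {x : Fin n} {i : Fin c.length} :
    c.index x ≤ i ↔ (x : ℕ) < c.sizeUpTo (i + 1) :=
  ⟨fun h => (c.lt_sizeUpTo_index_succ x).trans_le (c.monotone_sizeUpTo (Nat.succ_le_succ h)),
    fun h => Nat.find_min' _ ⟨h, i.2⟩⟩

theorem monotone_composition_index : Monotone c.index := fun _ y hxy =>
  (composition_index_le_iff c).2 <| (Fin.le_def.1 hxy).trans_lt (c.lt_sizeUpTo_index_succ y)

theorem card_composition_index_eq (i : Fin c.length) : #{x | c.index x = i} = c.blocksFun i := by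
  have : ({x | c.index x = i} : Finset _) = univ.map (c.embedding i).toEmbedding := by
    ext x
    simpa [eq_comm] using (c.mem_range_embedding_iff' (j := x)).symm
  simp [this]

theorem composition_index_eq_iff_of_covBy {x y : Fin n} (hxy : x ⋖ y) :
    c.index x = c.index y ↔ ¬∃ i ≤ c.length, c.sizeUpTo i = y := by
  have hxy' : (x : ℕ) + 1 = y := by simpa using hxy
  rw [(monotone_composition_index c hxy.le).ge_iff_eq.symm, composition_index_le_iff]
  refine ⟨fun h ⟨i, _, hi⟩ => ?_, fun h => ?_⟩
  · rcases le_or_gt i (c.index x) with hle | hlt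
    · exact (Fin.lt_def.1 hxy.lt).not_ge <|
        hi.ge.trans ((c.monotone_sizeUpTo hle).trans (c.sizeUpTo_index_le x))
    · exact h.not_ge ((c.monotone_sizeUpTo hlt).trans hi.le)
  · exact lt_of_le_of_ne (hxy' ▸ c.lt_sizeUpTo_index_succ x)
      fun hy => h ⟨_, (c.index x).2, hy.symm⟩

theorem nComposition_index_eq_iff_of_covBy {I : Finset ℕ} (hI : I ⊆ Icc 1 (n - 1)) {x y : Fin n}
    (hxy : x ⋖ y) : (nComposition n hI).index x = (nComposition n hI).index y ↔ (y : ℕ) ∈ I := by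
  have hboundary : (∃ i ≤ (nComposition n hI).length, (nComposition n hI).sizeUpTo i = y) ↔
      (y : ℕ) ≤ n ∧ (y : ℕ) ∉ I :=
    exists_sum_take_ncomp_eq_iff fun h => by simpa using hI h
  rw [composition_index_eq_iff_of_covBy _ hxy, hboundary, and_iff_right y.is_le', not_not]

theorem subset_des_iff_forall_covBy {I : Finset ℕ} (hI : I ⊆ Icc 1 (n - 1))
    {f : Equiv.Perm (Fin n)} :
    I ⊆ Des f ↔ ∀ x y : Fin n, x ⋖ y → (y : ℕ) ∈ I → f y < f x := by
  refine ⟨fun h x y hxy hy => ?_, fun h i hi => ?_⟩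
  · obtain ⟨_, _, hlt⟩ := mem_filter.1 (h hy)
    have hxy' : (x : ℕ) + 1 = y := by simpa using hxy
    convert hlt using 2
    exact Fin.ext (by simp only; omega)
  · have := mem_Icc.1 (hI hi)
    refine mem_filter.2 ⟨mem_Ico.2 (by omega), by omega, h _ _ ?_ hi⟩
    rw [Fin.covBy_iff, Nat.covBy_iff_add_one_eq]
    exact Nat.sub_add_cancel this.1

theorem subset_des_iff_strictAntiOn_index {I : Finset ℕ} (hI : I ⊆ Icc 1 (n - 1))
    {f : Equiv.Perm (Fin n)} :
    I ⊆ Des f ↔ ∀ j, StrictAntiOn f ((nComposition n hI).index ⁻¹' {j}) := by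
  rw [subset_des_iff_forall_covBy hI,
    forall_strictAntiOn_fiber_iff_forall_covBy (monotone_composition_index _)]
  refine forall₃_congr fun x y hxy => ?_
  rw [nComposition_index_eq_iff_of_covBy hI hxy]

end Composition

/-- The number of permutations `f` of `{1,…,n}` with `Des (f⁻¹) ⊇ I` and `Des f ⊇ J`
equals the number of `k × ℓ` matrices of non-negative integers whose `i`-th row sums
to `p_i` and whose `j`-th column sums to `q_j`, where `(p₁,…,p_k)` and `(q₁,…,q_ℓ)`
are the `n`-compositions of `I` and `J`. -/
theorem card_descents_superset_pair_eq_card_matrices (n : ℕ) (hn : 1 ≤ n)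
    (I J : Finset ℕ) (hI : I ⊆ Finset.Icc 1 (n - 1)) (hJ : J ⊆ Finset.Icc 1 (n - 1)) :
    Nat.card {f : Equiv.Perm (Fin n) // I ⊆ Des f⁻¹ ∧ J ⊆ Des f} =
      Nat.card {A : Fin (ncomp n I).length → Fin (ncomp n J).length → ℕ //
        (∀ i, ∑ j, A i j = (ncomp n I).get i) ∧
        (∀ j, ∑ i, A i j = (ncomp n J).get j)} := by
  let r : Fin n → Fin (ncomp n I).length := (nComposition n hI).index
  let c : Fin n → Fin (ncomp n J).length := (nComposition n hJ).index
  have card_fiber_r i : #{x | r x = i} = (ncomp n I).get i :=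
    card_composition_index_eq (nComposition n hI) i
  have card_fiber_c j : #{x | c x = j} = (ncomp n J).get j :=
    card_composition_index_eq (nComposition n hJ) j
  simp only [subset_des_iff_strictAntiOn_index hI, subset_des_iff_strictAntiOn_index hJ,
    ← card_fiber_r, ← card_fiber_c]
  exact (card_equivs_eq_card_words (monotone_composition_index _) c).trans
    (card_words_eq_card_matrices c _)
end

section
/- Fix n ≥ 1 and let M' be the 2^{n−1} × 2^{n−1} matrix with natural-number entries, indexed by the subsets of {1,…,n−1}, defined by M'_{I,J} = #{f a permutation of {1,…,n} : Des(f⁻¹) = I and Des(f) ⊇ J}. Then for every d ≥ 1 and every permutation y of {1,…,n}, the number b_{n,d}(y) of normal sequences of length d ending with y equals Σ_I (M'^{d−1})_{I,J}, where J = Des(y⁻¹); that is, b_{n,d}(y) is the J-entry of the row vector (1,1,…,1)·M'^{d−1}. -/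
/-- A sequence `(f₁,…,f_d)` of permutations of `{1,…,n}` is normal if
`Des (f_{k+1}⁻¹) ⊆ Des (f_k)` holds for every `1 ≤ k < d`. -/
def IsNormalSeq {n d : ℕ} (f : Fin d → Equiv.Perm (Fin n)) : Prop :=
  ∀ (k : ℕ) (h : k + 1 < d),
    Des (f ⟨k + 1, h⟩)⁻¹ ⊆ Des (f ⟨k, Nat.lt_of_succ_lt h⟩)

/-- `b n d`: the number of normal sequences of length `d` of permutations of `{1,…,n}`. -/
noncomputable def b (n d : ℕ) : ℕ :=
  Nat.card {f : Fin d → Equiv.Perm (Fin n) // IsNormalSeq f}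

/-- `bx n d y`: the number of normal sequences of length `d` of permutations of
`{1,…,n}` whose last entry is `y`. -/
noncomputable def bx (n d : ℕ) (y : Equiv.Perm (Fin n)) : ℕ :=
  Nat.card {f : Fin d → Equiv.Perm (Fin n) //
    IsNormalSeq f ∧ ∀ h : 0 < d, f ⟨d - 1, Nat.sub_lt h Nat.one_pos⟩ = y}

instance (s : Finset ℕ) : Fintype {I : Finset ℕ // I ⊆ s} :=
  Fintype.subtype s.powerset fun _ => Finset.mem_powerset

/-- The matrix `M'_n`, indexed by the subsets of `{1,…,n-1}`, whose `(I,J)`-entry is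
the number `a_{n,I,J}` of permutations `f` of `{1,…,n}` with `Des (f⁻¹) = I` and
`Des f ⊇ J`. -/
noncomputable def M' (n : ℕ) :
    Matrix {I : Finset ℕ // I ⊆ Finset.Icc 1 (n - 1)}
      {I : Finset ℕ // I ⊆ Finset.Icc 1 (n - 1)} ℕ :=
  fun I J => Nat.card {f : Equiv.Perm (Fin n) // Des f⁻¹ = I.1 ∧ J.1 ⊆ Des f}

open Finset Matrix

section Walks

variable {α R : Type*} [Fintype α] [DecidableEq α] [CommSemiring R]

theorem vecMul_pow_apply_eq_sum_walks (v : α → R) (A : Matrix α α R) (d : ℕ) (y : α) :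
    (v ᵥ* A ^ d) y =
      ∑ f : Fin (d + 1) → α with f (Fin.last d) = y,
        v (f 0) * ∏ k : Fin d, A (f k.castSucc) (f k.succ) := by
  induction d generalizing y with
  | zero =>
    rw [sum_filter, ← (Equiv.funUnique (Fin 1) α).symm.sum_comp]
    simp
  | succ d ih =>
    calc (v ᵥ* A ^ (d + 1)) y
        = ∑ x, (v ᵥ* A ^ d) x * A x y := by
          rw [pow_succ, ← vecMul_vecMul]
          rfl
      _ = ∑ g : Fin (d + 1) → α,
            (v (g 0) * ∏ k : Fin d, A (g k.castSucc) (g k.succ)) * A (g (Fin.last d)) y := by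
          simp only [ih, sum_filter, sum_mul, ite_mul, zero_mul]
          rw [sum_comm]
          simp only [sum_ite_eq, mem_univ, if_true]
      _ = ∑ f : Fin (d + 2) → α with f (Fin.last (d + 1)) = y,
            v (f 0) * ∏ k : Fin (d + 1), A (f k.castSucc) (f k.succ) := by
          rw [sum_filter, ← (Fin.snocEquiv fun _ : Fin (d + 2) => α).sum_comp,
            Fintype.sum_prod_type_right]
          refine sum_congr rfl fun g _ => ?_
          simp [Fin.prod_univ_castSucc, Fin.succ_castSucc, mul_assoc, -Fin.castSucc_succ]

theorem one_vecMul_pow_apply_eq_card_walks (r : α → α → Prop) [DecidableRel r] (d : ℕ) (y : α) :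
    (1 ᵥ* (Matrix.of fun x z => if r x z then (1 : R) else 0) ^ d) y =
      #{f : Fin (d + 1) → α | (∀ k : Fin d, r (f k.castSucc) (f k.succ)) ∧ f (Fin.last d) = y} := by
  rw [vecMul_pow_apply_eq_sum_walks, card_filter, Nat.cast_sum, sum_filter]
  refine sum_congr rfl fun f _ => ?_
  simp [Fintype.prod_boole, ← ite_and, and_comm]

end Walks

section Factorization

variable {l m R : Type*} [Fintype l] [Fintype m] [DecidableEq l] [DecidableEq m] [Semiring R]

theorem mul_mul_pow_eq_mul_pow_mul (C : Matrix l m R) (B : Matrix m l R) (k : ℕ) :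
    C * (B * C) ^ k = (C * B) ^ k * C := by
  induction k with
  | zero => simp
  | succ k ih => rw [pow_succ, ← Matrix.mul_assoc, ih, pow_succ, Matrix.mul_assoc, Matrix.mul_assoc,
      Matrix.mul_assoc]

theorem comp_vecMul_submatrix_pow (v : l → R) (B : Matrix m l R) (c : m → l) (k : ℕ) :
    (v ∘ c) ᵥ* B.submatrix id c ^ k =
      (v ᵥ* ((1 : Matrix l l R).submatrix id c * B) ^ k) ∘ c := by
  set C : Matrix l m R := (1 : Matrix l l R).submatrix id c
  have mul_C : B * C = B.submatrix id c := mul_submatrix_one (Equiv.refl l) c B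
  have vecMul_C (w : l → R) : w ᵥ* C = w ∘ c := by
    ext x
    simp [C, vecMul, dotProduct, Matrix.one_apply]
  calc (v ∘ c) ᵥ* B.submatrix id c ^ k
      = (v ᵥ* C) ᵥ* (B * C) ^ k := by rw [vecMul_C, mul_C]
    _ = (v ᵥ* (C * B) ^ k) ᵥ* C := by
        rw [vecMul_vecMul, mul_mul_pow_eq_mul_pow_mul, vecMul_vecMul]
    _ = (v ᵥ* (C * B) ^ k) ∘ c := vecMul_C _

end Factorization

section Descents

variable {n : ℕ}

theorem Des_subset_Icc (f : Equiv.Perm (Fin n)) : Des f ⊆ Icc 1 (n - 1) := fun i hi => by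
  have : i ∈ Ico 1 n := (mem_filter.1 hi).1
  simp only [mem_Ico, mem_Icc] at this ⊢
  omega

/-- The descent set of `f⁻¹`, as an index of the matrix `M'`. -/
def invDes (f : Equiv.Perm (Fin n)) : {I : Finset ℕ // I ⊆ Icc 1 (n - 1)} :=
  ⟨Des f⁻¹, Des_subset_Icc f⁻¹⟩

/-- The 0-1 matrix of the relation `J ⊆ Des f` between permutations `f` and sets `J`: one of the two
factors of `M'`. -/
def desSupersetMatrix (n : ℕ) :
    Matrix (Equiv.Perm (Fin n)) {I : Finset ℕ // I ⊆ Icc 1 (n - 1)} ℕ :=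
  Matrix.of fun f J => if J.1 ⊆ Des f then 1 else 0

theorem M'_eq_mul (n : ℕ) :
    M' n =
      (1 : Matrix {I : Finset ℕ // I ⊆ Icc 1 (n - 1)}
        {I : Finset ℕ // I ⊆ Icc 1 (n - 1)} ℕ).submatrix id invDes * desSupersetMatrix n := by
  ext I J
  have hcard : M' n I J = #{f : Equiv.Perm (Fin n) | I = invDes f ∧ J.1 ⊆ Des f} :=
    Nat.subtype_card _ fun f => by simp [invDes, Subtype.ext_iff, eq_comm]
  rw [hcard, card_filter, Matrix.mul_apply]
  refine sum_congr rfl fun f _ => ?_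
  simp [desSupersetMatrix, Matrix.one_apply, ← ite_and, and_comm]

theorem isNormalSeq_iff {d : ℕ} {f : Fin (d + 1) → Equiv.Perm (Fin n)} :
    IsNormalSeq f ↔ ∀ k : Fin d, Des (f k.succ)⁻¹ ⊆ Des (f k.castSucc) :=
  ⟨fun h k => h k (Nat.succ_lt_succ k.isLt), fun h k hk => h ⟨k, Nat.lt_of_succ_lt_succ hk⟩⟩

theorem bx_succ_eq_card (d : ℕ) (y : Equiv.Perm (Fin n)) :
    bx n (d + 1) y =
      #{f : Fin (d + 1) → Equiv.Perm (Fin n) |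
        (∀ k : Fin d, Des (f k.succ)⁻¹ ⊆ Des (f k.castSucc)) ∧ f (Fin.last d) = y} :=
  Nat.subtype_card _ fun f => by
    simp [isNormalSeq_iff, Fin.last]

end Descents

/-- `b_{n,d}(y)` is the `J`-entry of the row vector `(1,…,1) · M'_n^{d-1}`,
where `J = Des (y⁻¹)`. -/
theorem bx_eq_sum_pow_M' (n d : ℕ) (hn : 1 ≤ n) (hd : 1 ≤ d) (y : Equiv.Perm (Fin n))
    (J : {I : Finset ℕ // I ⊆ Finset.Icc 1 (n - 1)}) (hJ : J.1 = Des y⁻¹) :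
    bx n d y = ∑ I, (M' n ^ (d - 1)) I J := by
  obtain ⟨d, rfl⟩ := Nat.exists_eq_add_of_le' hd
  obtain rfl : J = invDes y := Subtype.ext hJ
  calc bx n (d + 1) y
      = (1 ᵥ* (desSupersetMatrix n).submatrix id invDes ^ d) y := by
        rw [bx_succ_eq_card]
        exact (one_vecMul_pow_apply_eq_card_walks (R := ℕ) (fun x z => Des z⁻¹ ⊆ Des x) d y).symm
    _ = (1 ᵥ* M' n ^ d) (invDes y) := by
        rw [M'_eq_mul]
        exact congrFun (comp_vecMul_submatrix_pow 1 (desSupersetMatrix n) invDes d) y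
    _ = ∑ I, (M' n ^ (d + 1 - 1)) I (invDes y) := by
        simp [vecMul, dotProduct]
end

section
/- For every n ≥ 2, the number of pairs (f,g) of permutations of {1,…,n} satisfying Des(g⁻¹) ⊆ Des(f) and Des(g) ⊇ {1,…,n−3} equals 2·3^n − (n+6)·2^{n−1} + 1. -/
open Finset Equiv

/-- `f` is strictly decreasing on every fibre of `c`; for a monotone `c` on `Fin n` the fibres are
the blocks of consecutive positions inside which a permutation may not ascend. -/
def StrictAntiOnFibers {α β κ : Type*} [Preorder α] [Preorder β] (c : α → κ) (f : α → β) : Prop :=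
  ∀ k, StrictAntiOn f (c ⁻¹' {k})

section Fibers

variable {n : ℕ} {κ : Type*} [LinearOrder κ] {c : Fin n → κ}

theorem strictAntiOnFibers_iff_eq_sort {w : Fin n → κ} {f : Perm (Fin n)}
    (hc : Monotone c) (hf : w ∘ f = c) :
    StrictAntiOnFibers c f ↔ Fin.revPerm * f = Tuple.sort (w ∘ Fin.rev) := by
  have hrev : (w ∘ Fin.rev) ∘ (Fin.revPerm * f : Perm (Fin n)) = c := by
    ext i; simp [← hf]
  simp only [Tuple.eq_sort_iff, hrev, hc, true_and, ← Function.comp_apply (f := w ∘ Fin.rev)]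
  constructor
  · intro h i j hij hij'
    simpa using h (c j) hij' rfl hij
  · rintro h k i hi j rfl hij
    simpa using h i j hij hi

theorem existsUnique_strictAntiOnFibers {w : Fin n → κ} {τ : Perm (Fin n)}
    (hc : Monotone c) (hτ : w ∘ τ = c) :
    ∃! f : Perm (Fin n), w ∘ f = c ∧ StrictAntiOnFibers c f := by
  set f : Perm (Fin n) := Fin.revPerm * Tuple.sort (w ∘ Fin.rev) with hf
  have hsort : Monotone (w ∘ f) := Tuple.monotone_sort (w ∘ Fin.rev)
  have hwf : w ∘ f = c := hτ ▸ Tuple.unique_monotone hsort (hτ ▸ hc)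
  have hrev : (Fin.revPerm * Fin.revPerm : Perm (Fin n)) = 1 := by ext; simp
  refine ⟨f, ⟨hwf, ?_⟩, fun g hg ↦ ?_⟩
  · rw [strictAntiOnFibers_iff_eq_sort hc hwf, hf, ← mul_assoc, hrev, one_mul]
  · rw [hf, ← (strictAntiOnFibers_iff_eq_sort hc hg.1).1 hg.2, ← mul_assoc, hrev, one_mul]

theorem card_strictAntiOnFibers_eq_card_orbit (hc : Monotone c) :
    Nat.card {f : Perm (Fin n) // StrictAntiOnFibers c f} =
      Nat.card (MulAction.orbit (Perm (Fin n))ᵈᵐᵃ c) := by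
  refine Nat.card_congr <|
    .ofBijective (fun f ↦ ⟨c ∘ (f.1⁻¹ : Perm (Fin n)), .mk f.1⁻¹, rfl⟩) ⟨?_, ?_⟩
  · rintro ⟨f, hf⟩ ⟨g, hg⟩ h
    have h' : c ∘ (f⁻¹ : Perm (Fin n)) = c ∘ (g⁻¹ : Perm (Fin n)) := congrArg Subtype.val h
    have hff : (c ∘ (f⁻¹ : Perm (Fin n))) ∘ f = c := by ext; simp
    have hgg : (c ∘ (g⁻¹ : Perm (Fin n))) ∘ g = c := by ext; simp
    exact Subtype.ext <| (existsUnique_strictAntiOnFibers hc hff).unique ⟨hff, hf⟩ ⟨h' ▸ hgg, hg⟩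
  · rintro ⟨_, σ, rfl⟩
    have hσ : (σ • c) ∘ (DomMulAct.mk.symm σ⁻¹ : Perm (Fin n)) = c := inv_smul_smul σ c
    obtain ⟨f, ⟨hf, hanti⟩, -⟩ := existsUnique_strictAntiOnFibers hc hσ
    refine ⟨⟨f, hanti⟩, Subtype.ext (funext fun v ↦ ?_)⟩
    simpa using (congrFun hf (f⁻¹ v)).symm

theorem card_strictAntiOnFibers_mul_prod_factorial [Fintype κ] (hc : Monotone c) :
    Nat.card {f : Perm (Fin n) // StrictAntiOnFibers c f} * ∏ k, (#{i | c i = k}).factorial =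
      n.factorial := by
  have hstab : Nat.card (MulAction.stabilizer (Perm (Fin n))ᵈᵐᵃ c) =
      ∏ k, (#{i | c i = k}).factorial := by
    simp_rw [← Fintype.card_subtype, ← DomMulAct.stabilizer_card, ← Nat.card_eq_fintype_card]
    exact Nat.card_congr (subtypeEquiv DomMulAct.mk.symm fun _ ↦ Iff.rfl)
  rw [card_strictAntiOnFibers_eq_card_orbit hc, ← hstab, ← Nat.card_prod,
    Nat.card_congr (MulAction.orbitProdStabilizerEquivGroup _ c), ← Nat.card_congr DomMulAct.mk,
    Nat.card_perm, Nat.card_fin]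

theorem StrictAntiOnFibers.eq_of_forall_ne {f g : Perm (Fin n)} (hf : StrictAntiOnFibers c f)
    (hg : StrictAntiOnFibers c g) (hc : Monotone c) (k : κ) (h : ∀ i, c i ≠ k → f i = g i) :
    f = g := by
  set w := c ∘ (g⁻¹ : Perm (Fin n))
  have hwg : w ∘ g = c := by ext; simp [w]
  have hwf : w ∘ f = c := by
    funext i
    obtain ⟨j, hj⟩ := g.surjective (f i)
    rw [Function.comp_apply, ← hj, ← Function.comp_apply (f := w), hwg]
    by_contra! hij
    by_cases hk : c i = k
    · exact hij (congrArg c (f.injective ((h j (hk ▸ hij)).trans hj)))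
    · exact hij (congrArg c (g.injective (hj.trans (h i hk))))
  exact (existsUnique_strictAntiOnFibers hc hwg).unique ⟨hwf, hf⟩ ⟨hwg, hg⟩

theorem mem_Des {f : Perm (Fin n)} {i : ℕ} (h1 : 1 ≤ i) (hi : i < n) :
    i ∈ Des f ↔ f ⟨i, hi⟩ < f ⟨i - 1, by omega⟩ := by
  simp [Des, h1, hi]

theorem strictAntiOnFibers_iff_mem_Des {f : Perm (Fin n)} (hc : Monotone c) :
    StrictAntiOnFibers c f ↔ ∀ i, 1 ≤ i → ∀ hi : i < n,
      c ⟨i - 1, by omega⟩ = c ⟨i, hi⟩ → i ∈ Des f := by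
  constructor
  · intro hf i h1 hi hci
    exact (mem_Des h1 hi).2 (hf _ hci rfl (Fin.mk_lt_mk.2 (by omega)))
  · intro h k
    have hconn : (c ⁻¹' {k}).OrdConnected := Set.ordConnected_singleton.preimage_mono hc
    refine strictAntiOn_of_lt_pred hconn fun i hmin hi hi' ↦ ?_
    obtain _ | n := n
    · exact i.elim0
    obtain ⟨j, rfl⟩ := Fin.exists_succ_eq.2 fun h0 : i = 0 ↦ hmin (h0 ▸ isMin_bot)
    rw [Fin.orderPred_succ] at hi' ⊢
    have hj := h (j + 1) (by omega) (by omega) (hi'.trans hi.symm)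
    exact (mem_Des (by omega) (by omega)).1 hj

theorem StrictAntiOnFibers.mem_Des_inv {g : Perm (Fin n)} (hg : StrictAntiOnFibers c g)
    (hc : Monotone c) {i : ℕ} (h1 : 1 ≤ i) (hi : i < n) :
    i ∈ Des g⁻¹ ↔ c (g⁻¹ ⟨i, hi⟩) ≤ c (g⁻¹ ⟨i - 1, by omega⟩) := by
  rw [mem_Des h1 hi]
  refine ⟨fun h ↦ hc h.le, fun h ↦ ?_⟩
  by_contra! hle
  have hval : i ≤ i - 1 := by
    simpa using (hg _).antitoneOn ((hc hle).antisymm h) rfl hle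
  omega

end Fibers

/-- The index of the block containing `i`, for the consecutive and possibly empty blocks `[0,x)`,
`[x,y)`, `[y,n)` of `Fin n`; meant for `x ≤ y ≤ n`. -/
def threeBlocks (n x y : ℕ) (i : Fin n) : Fin 3 :=
  if (i : ℕ) < x then 0 else if (i : ℕ) < y then 1 else 2

section Blocks

variable {n x y : ℕ}

theorem threeBlocks_monotone (n x y : ℕ) : Monotone (threeBlocks n x y) := by
  intro i j (hij : (i : ℕ) ≤ j)
  unfold threeBlocks
  split_ifs <;> omega

theorem card_threeBlocks_fiber (hxy : x ≤ y) (hy : y ≤ n) (k : Fin 3) :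
    #{i | threeBlocks n x y i = k} = ![x, y - x, n - y] k := by
  have hfiber (u v : ℕ) (hv : v ≤ n) (h : ∀ i, threeBlocks n x y i = k ↔ i.val ∈ Ico u v) :
      #{i | threeBlocks n x y i = k} = v - u := by
    rw [← Nat.card_Ico, ← card_attachFin (Ico u v) fun i hi ↦ (mem_Ico.1 hi).2.trans_le hv]
    congr 1
    ext i
    rw [mem_filter_univ, h, mem_attachFin]
  fin_cases k
  · exact hfiber 0 x (by omega) fun i ↦ by
      unfold threeBlocks; split_ifs <;> simp <;> omega
  · exact hfiber x y (by omega) fun i ↦ by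
      unfold threeBlocks; split_ifs <;> simp <;> omega
  · exact hfiber y n (by omega) fun i ↦ by
      unfold threeBlocks; split_ifs <;> simp <;> omega

theorem card_strictAntiOnFibers_threeBlocks (hxy : x ≤ y) (hy : y ≤ n) :
    Nat.card {f : Perm (Fin n) // StrictAntiOnFibers (threeBlocks n x y) f} =
      n.choose y * y.choose x := by
  have h := card_strictAntiOnFibers_mul_prod_factorial (threeBlocks_monotone n x y)
  simp only [card_threeBlocks_fiber hxy hy, Fin.prod_univ_three] at h
  have hpos : 0 < x.factorial * (y - x).factorial * (n - y).factorial := by positivity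
  refine Nat.eq_of_mul_eq_mul_right hpos (h.trans ?_)
  rw [← Nat.choose_mul_factorial_mul_factorial hy, ← Nat.choose_mul_factorial_mul_factorial hxy]
  ring

theorem strictAntiOnFibers_threeBlocks_iff {f : Perm (Fin n)} (hxy : x ≤ y) :
    StrictAntiOnFibers (threeBlocks n x y) f ↔ Ico 1 n \ {x, y} ⊆ Des f := by
  have hblock (i : ℕ) (h1 : 1 ≤ i) (hi : i < n) :
      threeBlocks n x y ⟨i - 1, by omega⟩ = threeBlocks n x y ⟨i, hi⟩ ↔
        i ∉ ({x, y} : Finset ℕ) := by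
    simp only [threeBlocks, mem_insert, mem_singleton]
    split_ifs <;> simp <;> omega
  rw [strictAntiOnFibers_iff_mem_Des (threeBlocks_monotone n x y)]
  simp only [subset_iff, mem_sdiff, mem_Ico]
  exact ⟨fun h i hi ↦ h i hi.1.1 hi.1.2 ((hblock i hi.1.1 hi.1.2).2 hi.2),
    fun h i h1 hi hb ↦ h ⟨⟨h1, hi⟩, (hblock i h1 hi).1 hb⟩⟩

theorem card_sdiff_pair_subset_Des (hxy : x ≤ y) (hy : y ≤ n) :
    Nat.card {f : Perm (Fin n) // Ico 1 n \ {x, y} ⊆ Des f} = n.choose y * y.choose x := by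
  simp_rw [← strictAntiOnFibers_threeBlocks_iff hxy, card_strictAntiOnFibers_threeBlocks hxy hy]

end Blocks

section LastTwo

variable {m : ℕ} {g : Perm (Fin (m + 2))}

/-- The last two values of `g`, in order and numbered from `0`; the size is `m + 2` so that both
exist. -/
def lastTwo (g : Perm (Fin (m + 2))) : ℕ × ℕ :=
  (g (Fin.last m).castSucc, g (Fin.last (m + 1)))

theorem lastTwo_mem_offDiag : lastTwo g ∈ (range (m + 2)).offDiag := by
  simp [lastTwo, Fin.val_inj, Fin.ext_iff (a := (Fin.last m).castSucc)]

theorem Icc_subset_Des_iff : Icc 1 (m - 1) ⊆ Des g ↔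
    StrictAntiOnFibers (threeBlocks (m + 2) m (m + 1)) g := by
  rw [strictAntiOnFibers_threeBlocks_iff m.le_succ]
  congr! 1
  ext i
  simp only [mem_Icc, mem_sdiff, mem_Ico, mem_insert, mem_singleton]
  omega

theorem threeBlocks_inv_apply (v : Fin (m + 2)) :
    threeBlocks (m + 2) m (m + 1) (g⁻¹ v) =
      if (v : ℕ) = (lastTwo g).2 then 2 else if (v : ℕ) = (lastTwo g).1 then 1 else 0 := by
  obtain ⟨p, rfl⟩ := g.surjective v
  simp only [lastTwo, Fin.val_inj, Perm.inv_def, symm_apply_apply, threeBlocks,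
    g.injective.eq_iff]
  simp only [Fin.ext_iff, Fin.val_castSucc, Fin.val_last]
  split_ifs <;> first | rfl | omega

theorem Des_inv_eq (hg : Icc 1 (m - 1) ⊆ Des g) :
    Des g⁻¹ = Ico 1 (m + 2) \
      if (lastTwo g).1 = (lastTwo g).2 + 1 then {(lastTwo g).2}
      else {(lastTwo g).1, (lastTwo g).2} := by
  ext i
  by_cases hi : i ∈ Ico 1 (m + 2)
  · obtain ⟨h1, hi'⟩ := mem_Ico.1 hi
    rw [(Icc_subset_Des_iff.1 hg).mem_Des_inv (threeBlocks_monotone ..) h1 hi',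
      mem_sdiff]
    simp only [threeBlocks_inv_apply, hi]
    split_ifs <;> simp <;> omega
  · exact iff_of_false (mt (mem_filter.1 · |>.1) hi) (by simp [hi])

theorem injOn_lastTwo : Set.InjOn lastTwo {g : Perm (Fin (m + 2)) | Icc 1 (m - 1) ⊆ Des g} := by
  intro f hf g hg h
  simp only [Set.mem_ofPred_eq, Icc_subset_Des_iff] at hf hg
  simp only [lastTwo, Prod.mk.injEq, Fin.val_inj] at h
  refine hf.eq_of_forall_ne hg (threeBlocks_monotone ..) 0 fun i hi ↦ ?_
  obtain ⟨i, rfl⟩ | rfl := i.eq_castSucc_or_eq_last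
  · obtain ⟨i, rfl⟩ | rfl := i.eq_castSucc_or_eq_last
    · simp [threeBlocks] at hi
    · exact h.1
  · exact h.2

theorem image_lastTwo :
    image lastTwo {g : Perm (Fin (m + 2)) | Icc 1 (m - 1) ⊆ Des g} = (range (m + 2)).offDiag := by
  refine eq_of_subset_of_card_le (image_subset_iff.2 fun _ _ ↦ lastTwo_mem_offDiag) ?_
  rw [card_image_of_injOn (by simpa using injOn_lastTwo), ← Fintype.card_subtype,
    ← Nat.card_eq_fintype_card]
  simp_rw [Icc_subset_Des_iff, card_strictAntiOnFibers_threeBlocks m.le_succ (Nat.le_succ _)]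
  simp [offDiag_card, ← Nat.mul_sub_one]

/-- The number of permutations `f` of `Fin n` with `Des g⁻¹ ⊆ Des f`, where `g` decreases up to its
last two values `a ≠ b`, numbered from `0`. -/
def extensionCount (n a b : ℕ) : ℕ :=
  if a = b + 1 then n.choose b else n.choose (max a b) * (max a b).choose (min a b)

theorem card_Des_inv_subset (hg : Icc 1 (m - 1) ⊆ Des g) :
    Nat.card {f : Perm (Fin (m + 2)) // Des g⁻¹ ⊆ Des f} =
      extensionCount (m + 2) (lastTwo g).1 (lastTwo g).2 := by
  have hmem := mem_offDiag.1 (lastTwo_mem_offDiag (g := g))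
  simp only [mem_range] at hmem
  rw [Des_inv_eq hg, extensionCount]
  generalize (lastTwo g).1 = a, (lastTwo g).2 = b at *
  split_ifs with h
  · simpa using card_sdiff_pair_subset_Des (n := m + 2) (le_refl b) (by omega)
  · rw [← card_sdiff_pair_subset_Des min_le_max (by omega)]
    obtain hab | hab := le_total a b <;> simp [hab, pair_comm]

end LastTwo

theorem sum_range_offDiag {M : Type*} [AddCommMonoid M] (F : ℕ × ℕ → M) (n : ℕ) :
    ∑ p ∈ (range n).offDiag, F p = ∑ y ∈ range n, ∑ x ∈ range y, (F (x, y) + F (y, x)) := by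
  induction n with
  | zero => simp
  | succ n ih =>
    have hleft : Disjoint (range n).offDiag ({n} ×ˢ range n) := by grind [disjoint_left]
    have hright : Disjoint ((range n).offDiag ∪ {n} ×ˢ range n) (range n ×ˢ {n}) := by
      grind [disjoint_left]
    rw [sum_range_succ, ← ih, range_add_one, offDiag_insert notMem_range_self, sum_union hright,
      sum_union hleft, sum_product, sum_singleton, sum_product_right, sum_singleton,
      sum_add_distrib, add_assoc, add_comm (∑ x ∈ range n, F (n, x))]

theorem sum_range_choose_succ (n : ℕ) :
    (∑ k ∈ range n, (n + 1).choose k : ℤ) = 2 ^ (n + 1) - (n + 1) - 1 := by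
  have h := Nat.sum_range_choose (n + 1)
  rw [sum_range_succ, sum_range_succ, Nat.choose_self, Nat.choose_succ_self_right] at h
  zify at h
  linarith

theorem sum_extensionCount_row (n y : ℕ) :
    (∑ x ∈ range (y + 1), (extensionCount n x (y + 1) + extensionCount n (y + 1) x) : ℤ) =
      n.choose (y + 1) * (2 * (2 ^ (y + 1) - 1) - (y + 1)) + n.choose y := by
  have hgen (x : ℕ) (hx : x ∈ range y) :
      (extensionCount n x (y + 1) + extensionCount n (y + 1) x : ℤ) =
        2 * n.choose (y + 1) * (y + 1).choose x := by
    have hxy := mem_range.1 hx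
    rw [extensionCount, extensionCount, if_neg (by omega), if_neg (by omega),
      max_eq_right (by omega), min_eq_left (by omega), max_eq_left (by omega),
      min_eq_right (by omega)]
    push_cast
    ring
  rw [sum_range_succ, sum_congr rfl hgen, ← mul_sum, sum_range_choose_succ]
  rw [extensionCount, extensionCount, if_neg (by omega), if_pos rfl, max_eq_right y.le_succ,
    min_eq_left y.le_succ, Nat.choose_succ_self_right]
  push_cast
  ring

theorem sum_range_choose_mul_two_pow_sub (n : ℕ) :
    (∑ y ∈ range (n + 1), n.choose y * (2 * (2 ^ y - 1) - y) : ℤ) =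
      2 * 3 ^ n - 2 * 2 ^ n - n * 2 ^ (n - 1) := by
  have htwo : (∑ y ∈ range (n + 1), n.choose y : ℤ) = 2 ^ n := mod_cast Nat.sum_range_choose n
  have hthree : (∑ y ∈ range (n + 1), 2 ^ y * n.choose y : ℤ) = 3 ^ n := by
    simpa using (add_pow (2 : ℤ) 1 n).symm
  have hmul : (∑ y ∈ range (n + 1), y * n.choose y : ℤ) = n * 2 ^ (n - 1) :=
    mod_cast Nat.sum_range_mul_choose n
  rw [← htwo, ← hthree, ← hmul, mul_sum, mul_sum, ← sum_sub_distrib, ← sum_sub_distrib]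
  exact sum_congr rfl fun y _ ↦ by ring

theorem sum_extensionCount (m : ℕ) :
    (∑ p ∈ (range (m + 1)).offDiag, extensionCount (m + 1) p.1 p.2 : ℤ) =
      2 * 3 ^ (m + 1) - (m + 7) * 2 ^ m + 1 := by
  have hrow := sum_range_choose_mul_two_pow_sub (m + 1)
  rw [sum_range_succ, sum_range_succ'] at hrow
  push_cast [Nat.choose_self] at hrow
  rw [sum_range_offDiag (fun p ↦ (extensionCount (m + 1) p.1 p.2 : ℤ)), sum_range_succ',
    sum_range_zero, sum_congr rfl fun y _ ↦ sum_extensionCount_row (m + 1) y, sum_add_distrib,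
    sum_range_choose_succ]
  simp only [Nat.choose_zero_right, Nat.cast_one] at hrow
  linear_combination hrow

theorem card_subtype_prod_eq_sum {α β : Type*} [Finite α] [Fintype β] (R : α → β → Prop)
    (Q : β → Prop) [DecidablePred Q] :
    Nat.card {p : α × β // R p.1 p.2 ∧ Q p.2} = ∑ b with Q b, Nat.card {a // R a b} := by
  let e : {p : α × β // R p.1 p.2 ∧ Q p.2} ≃ Σ b : {b // Q b}, {a // R a b} :=
    { toFun := fun p ↦ ⟨⟨p.1.2, p.2.2⟩, p.1.1, p.2.1⟩
      invFun := fun s ↦ ⟨(s.2.1, s.1.1), s.2.2, s.1.2⟩ }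
  rw [Nat.card_congr e, Nat.card_sigma, sum_subtype _ (fun _ ↦ mem_filter_univ _)]

/-- The number `b_{n,3}(Δ_{n-2})` of pairs `(f,g)` of permutations of `{1,…,n}`
with `Des (g⁻¹) ⊆ Des f` and `Des g ⊇ {1,…,n-3}` equals `2·3^n - (n+6)·2^{n-1} + 1`. -/
theorem card_pairs_normal_last_superset' (n : ℕ) (hn : 2 ≤ n) :
    (Nat.card {p : Equiv.Perm (Fin n) × Equiv.Perm (Fin n) //
        Des p.2⁻¹ ⊆ Des p.1 ∧ Finset.Icc 1 (n - 3) ⊆ Des p.2} : ℤ) =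
      2 * 3 ^ n - (n + 6) * 2 ^ (n - 1) + 1 := by
  obtain ⟨m, rfl⟩ : ∃ m, n = m + 2 := ⟨n - 2, by omega⟩
  have hcard :=
    calc Nat.card {p : Perm (Fin (m + 2)) × Perm (Fin (m + 2)) //
          Des p.2⁻¹ ⊆ Des p.1 ∧ Icc 1 (m - 1) ⊆ Des p.2}
      _ = ∑ g : Perm (Fin (m + 2)) with Icc 1 (m - 1) ⊆ Des g,
            Nat.card {f : Perm (Fin (m + 2)) // Des g⁻¹ ⊆ Des f} :=
        card_subtype_prod_eq_sum (fun f g ↦ Des g⁻¹ ⊆ Des f) (Icc 1 (m - 1) ⊆ Des ·)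
      _ = ∑ g : Perm (Fin (m + 2)) with Icc 1 (m - 1) ⊆ Des g,
            extensionCount (m + 2) (lastTwo g).1 (lastTwo g).2 :=
        sum_congr rfl fun g hg ↦ card_Des_inv_subset (mem_filter.1 hg).2
      _ = ∑ p ∈ (range (m + 2)).offDiag, extensionCount (m + 2) p.1 p.2 := by
        rw [← image_lastTwo, sum_image (by simpa using injOn_lastTwo)]
  rw [show m + 2 - 3 = m - 1 by omega, hcard, Nat.cast_sum, sum_extensionCount]
  push_cast
  ring
end
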